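/- Let V be a real inner product space of dimension 3, β ∈ ℝ, λ, v ∈ V, c ∈ ℝ, and let u : V → V be a self-adjoint linear map. Then ⟪u, c·id_V + S_λ(v)⟫_β = ⟨2(u(λ) − β·(tr u)·λ), v⟩ + (1 − 3β)·(tr u)·c. In other words, with the inner product ⟨(v₁,c₁),(v₂,c₂)⟩ = ⟨v₁,v₂⟩ + c₁c₂ on V × ℝ, the adjoint of the conformal symbol (v,c) ↦ c·id_V + S_λ(v) with respect to the pairing ⟪·,·⟫_β is u ↦ (2(u(λ) − β (tr u) λ), (1 − 3β) tr u). -/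

import Mathlib

/-!
`S_l(v)` is the sum of the rank-one maps `w ↦ ⟪l, w⟫ • v` and `w ↦ ⟪v, w⟫ • l`, and composing it
with `u` on the left replaces `v`, `l` in the targets by `u v`, `u l`. As the trace of
`w ↦ φ w • x` is `φ x`, this gives `tr (S_l(v)) = 2⟪l, v⟫` (`trace_symOp`) and
`tr (u ∘ S_l(v)) = ⟪l, u v⟫ + ⟪v, u l⟫` (`trace_comp_symOp`). Self-adjointness of `u` makes the
last two terms equal, and `tr id = 3` accounts for the factor `1 - 3β` of the conformal part.
-/

open scoped RealInnerProductSpace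

/-- The symbol operator `S_λ(v) : V → V`, `w ↦ ⟨λ,w⟩ v + ⟨v,w⟩ λ`. -/
noncomputable def symOp {V : Type*} [NormedAddCommGroup V] [InnerProductSpace ℝ V]
    (l v : V) : V →ₗ[ℝ] V where
  toFun w := ⟪l, w⟫ • v + ⟪v, w⟫ • l
  map_add' a b := by simp only [inner_add_right, add_smul]; abel
  map_smul' c a := by simp [inner_smul_right, smul_add, smul_smul]

/-- The DeWitt-family pairing `⟪u,w⟫_β := tr(u∘w) − β (tr u)(tr w)` on endomorphisms of `V`. -/
noncomputable def dewittPairing {V : Type*} [NormedAddCommGroup V] [InnerProductSpace ℝ V]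
    (β : ℝ) (u w : V →ₗ[ℝ] V) : ℝ :=
  LinearMap.trace ℝ V (u ∘ₗ w) - β * (LinearMap.trace ℝ V u) * (LinearMap.trace ℝ V w)

theorem trace_comp_symOp {V : Type*} [NormedAddCommGroup V]
    [InnerProductSpace ℝ V] [FiniteDimensional ℝ V] (l v : V) (u : V →ₗ[ℝ] V) :
    LinearMap.trace ℝ V (u ∘ₗ symOp l v) = ⟪l, u v⟫ + ⟪v, u l⟫ := by
  have h : u ∘ₗ symOp l v =
      (innerₗ V l).smulRight (u v) + (innerₗ V v).smulRight (u l) := by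
    ext w
    simp [symOp]
  rw [h, map_add, LinearMap.trace_smulRight, LinearMap.trace_smulRight]
  simp

theorem trace_symOp {V : Type*} [NormedAddCommGroup V]
    [InnerProductSpace ℝ V] [FiniteDimensional ℝ V] (l v : V) :
    LinearMap.trace ℝ V (symOp l v) = 2 * ⟪l, v⟫ := by
  have h := trace_comp_symOp l v LinearMap.id
  rw [LinearMap.id_comp, LinearMap.id_apply, LinearMap.id_apply, real_inner_comm l v] at h
  linarith

/-- in dimension 3, with the inner product
`⟨(v₁,c₁),(v₂,c₂)⟩ = ⟨v₁,v₂⟩ + c₁c₂` on `V × ℝ`, the adjoint of the conformal symbol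
`(v,c) ↦ c·id_V + S_λ(v)` with respect to the DeWitt pairing `⟪·,·⟫_β` is
`u ↦ (2(u(λ) − β (tr u) λ), (1 − 3β) tr u)`. -/
theorem adjoint_conformal_symbol {V : Type*} [NormedAddCommGroup V]
    [InnerProductSpace ℝ V] [FiniteDimensional ℝ V]
    (hdim : Module.finrank ℝ V = 3) (β : ℝ) (l v : V) (c : ℝ) (u : V →ₗ[ℝ] V)
    (hu : LinearMap.IsSymmetric u) :
    dewittPairing β u (c • (LinearMap.id : V →ₗ[ℝ] V) + symOp l v) =
      ⟪(2 : ℝ) • (u l - (β * LinearMap.trace ℝ V u) • l), v⟫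
        + (1 - 3 * β) * (LinearMap.trace ℝ V u) * c := by
  have huv : ⟪l, u v⟫ = ⟪u l, v⟫ := (hu l v).symm
  have hvu : ⟪v, u l⟫ = ⟪u l, v⟫ := real_inner_comm _ _
  simp only [dewittPairing, LinearMap.comp_add, LinearMap.comp_smul, LinearMap.comp_id, map_add,
    map_smul, trace_comp_symOp, trace_symOp, LinearMap.trace_id, hdim, huv, hvu, smul_eq_mul,
    real_inner_smul_left, inner_sub_left]
  push_cast
  ring
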